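/- If X_s = Y_s − cs where Y is a pure-jump non-decreasing cyclically interchangeable process with Y_0 = 0, c > 0, and X_t = −x < 0 almost surely, then P(T_x = t) = x/(ct). -/

import Mathlib

open Set MeasureTheory
open scoped ENNReal

/-- The cyclic path shift `θ_u` over the interval `[0, t]`. -/
noncomputable def theta (t u : ℝ) (ω : ℝ → ℝ) : ℝ → ℝ :=
  fun s => if s < t - u then ω 0 + ω (s + u) - ω u else ω (s - (t - u)) + ω t - ω u

/-- A function is pure jump on `[0,t]` if it is the sum of its jumps:
`f s = f 0 + ∑_{0 < u ≤ s} (f u − f(u−))`. -/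
def PureJumpOn (f : ℝ → ℝ) (t : ℝ) : Prop :=
  ∀ s ∈ Icc (0:ℝ) t, f s = f 0 + ∑' u : (Ioc (0:ℝ) s), (f u - Function.leftLim f u)

open Filter Topology

lemma rc_rat {h : ℝ → ℝ} {s b a : ℝ} (hc : ContinuousWithinAt h (Ici s) s) (hsb : s < b)
    (H : ∀ r, s < r → r < b → (∃ q : ℚ, (q : ℝ) = r) → a ≤ h r) : a ≤ h s := by
  by_contra hlt
  push Not at hlt
  have h1 : ∀ᶠ r in 𝓝[≥] s, h r < a := hc.eventually (gt_mem_nhds hlt)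
  have h2 : ∀ᶠ r in 𝓝[>] s, h r < a := h1.filter_mono (nhdsWithin_mono _ Ioi_subset_Ici_self)
  obtain ⟨d, hd, hd'⟩ := (mem_nhdsGT_iff_exists_Ioo_subset).1 h2
  obtain ⟨q, hq1, hq2⟩ := exists_rat_btwn (lt_min hd hsb)
  have := H q hq1 (hq2.trans_le (min_le_right _ _)) ⟨q, rfl⟩
  have h3 : h q < a := hd' ⟨hq1, hq2.trans_le (min_le_left _ _)⟩
  linarith

/-- Shifted version of the rational approximation. -/
lemma rc_rat_shift {h : ℝ → ℝ} {s b a : ℝ} (d : ℝ) (hc : ContinuousWithinAt h (Ici s) s)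
    (hsb : s < b)
    (H : ∀ q : ℚ, s < q + d → q + d < b → a ≤ h (q + d)) : a ≤ h s := by
  have hc' : ContinuousWithinAt (fun r => h (r + d)) (Ici (s - d)) (s - d) := by
    have hc2 : ContinuousWithinAt h (Ici s) (s - d + d) := by simpa using hc
    refine ContinuousWithinAt.comp (g := h) (f := fun r => r + d) hc2 (by fun_prop) ?_
    intro r hr
    simp only [mem_Ici] at hr ⊢
    linarith
  have := rc_rat (b := b - d) (a := a) hc' (by linarith) (by
    rintro r h1 h2 ⟨q, rfl⟩
    exact H q (by linarith) (by linarith))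
  simpa using this

lemma pj_deriv {f : ℝ → ℝ} {t : ℝ} (ht : 0 < t) (hm : MonotoneOn f (Icc 0 t))
    (hr : ∀ s ∈ Ico (0:ℝ) t, ContinuousWithinAt f (Ici s) s) (hpj : PureJumpOn f t) :
    ∀ᵐ u : ℝ, u ∈ Ioo 0 t → HasDerivAt f 0 u := by
  have hcl : ∀ s, max 0 (min s t) ∈ Icc 0 t := fun s =>
    ⟨le_max_left _ _, max_le ht.le (min_le_right _ _)⟩
  have hcl' : ∀ s ∈ Icc 0 t, max 0 (min s t) = s := fun s hs => by
    rw [min_eq_left hs.2, max_eq_right hs.1]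
  let F : StieltjesFunction ℝ :=
    { toFun := fun s => f (max 0 (min s t))
      mono' := fun a b hab => hm (hcl a) (hcl b) (max_le_max le_rfl (min_le_min hab le_rfl))
      right_continuous' := by
        intro s
        rcases lt_or_ge s t with hs | hs
        · have h1 : max 0 (min s t) ∈ Ico 0 t := ⟨le_max_left _ _, max_lt ht (by simp [hs])⟩
          refine ContinuousWithinAt.comp (g := f) (f := fun s => max 0 (min s t))
            (t := Ici (max 0 (min s t))) (hr _ h1)
            (Continuous.continuousWithinAt (by fun_prop)) ?_
          intro r hr
          exact max_le_max le_rfl (min_le_min (mem_Ici.1 hr) le_rfl)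
        · refine ContinuousWithinAt.congr (f := fun _ => f t) continuousWithinAt_const ?_ ?_
          · intro r hr'
            simp only [mem_Ici] at hr'
            show f _ = _
            rw [min_eq_right (hs.trans hr'), max_eq_right ht.le]
          · show f _ = _
            rw [min_eq_right hs, max_eq_right ht.le] }
  have hF : ∀ s, F s = f (max 0 (min s t)) := fun s => rfl
  have hF0 : ∀ s ≤ 0, F s = f 0 := fun s hs => by
    rw [hF, min_eq_left (hs.trans ht.le), max_eq_left hs]
  have hFt : ∀ s, t ≤ s → F s = f t := fun s hs => by
    rw [hF, min_eq_right hs, max_eq_right ht.le]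
  have hFm : ∀ s ∈ Icc 0 t, F s = f s := fun s hs => by rw [hF, hcl' s hs]
  let j : ℝ → ℝ := fun u => F u - Function.leftLim F u
  have hj0 : ∀ u, u ∉ Ioc 0 t → j u = 0 := by
    intro u hu
    rcases le_or_gt u 0 with h | h
    · have : Function.leftLim F u = f 0 := by
        apply leftLim_eq_of_tendsto
        refine tendsto_const_nhds.congr' ?_
        filter_upwards [self_mem_nhdsWithin] with r hr'
        exact (hF0 r (le_trans (le_of_lt hr') h)).symm
      simp only [j, this, hF0 u h, sub_self]
    · have h' : t < u := by
        by_contra h2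
        exact hu ⟨h, not_lt.1 h2⟩
      have : Function.leftLim F u = f t := by
        apply leftLim_eq_of_tendsto
        refine tendsto_const_nhds.congr' ?_
        filter_upwards [Ioo_mem_nhdsLT h'] with r hr'
        exact (hFt r hr'.1.le).symm
      simp only [j, this, hFt u h'.le, sub_self]
  have hj1 : ∀ u ∈ Ioc 0 t, j u = f u - Function.leftLim f u := by
    intro u hu
    have : Function.leftLim f u = Function.leftLim F u := by
      apply leftLim_eq_of_tendsto
      refine (F.mono.tendsto_leftLim u).congr' ?_
      filter_upwards [Ioo_mem_nhdsLT hu.1] with r hr'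
      exact hFm r ⟨hr'.1.le, hr'.2.le.trans hu.2⟩
    simp only [j, this, hFm u ⟨hu.1.le, hu.2⟩]
  let D : Set ℝ := {u | Function.leftLim F u ≠ F u}
  have hD : D.Countable := F.countable_leftLim_ne
  have hsum : ∑' u : D, j u = f t - f 0 := by
    have h1 := hpj t ⟨ht.le, le_rfl⟩
    have h2 : ∑' u : (Ioc (0:ℝ) t), (f u - Function.leftLim f u) = ∑' u : (Ioc (0:ℝ) t), j u :=
      tsum_congr fun u => (hj1 u u.2).symm
    have h3 : ∑' u : (Ioc (0:ℝ) t), j u = ∑' u, j u := by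
      apply tsum_subtype_eq_of_support_subset
      intro u hu
      by_contra h
      exact hu (hj0 u h)
    have h4 : ∑' u : D, j u = ∑' u, j u := by
      apply tsum_subtype_eq_of_support_subset
      intro u hu h
      apply hu
      simp only [j, h, sub_self]
    rw [h4, ← h3, ← h2]
    linarith
  have hjn : ∀ u, 0 ≤ j u := fun u => sub_nonneg.2 (F.mono.leftLim_le le_rfl)
  have huniv : F.measure univ = ENNReal.ofReal (f t - f 0) := by
    apply F.measure_univ
    · refine tendsto_const_nhds.congr' ?_
      filter_upwards [Iic_mem_atBot 0] with r hr'
      exact (hF0 r hr').symm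
    · refine tendsto_const_nhds.congr' ?_
      filter_upwards [Ici_mem_atTop t] with r hr'
      exact (hFt r hr').symm
  have hDm : MeasurableSet D := hD.measurableSet
  have hfin : IsFiniteMeasure F.measure := ⟨by rw [huniv]; exact ENNReal.ofReal_lt_top⟩
  have hmD : F.measure D = ENNReal.ofReal (f t - f 0) := by
    have h1 : F.measure D = ∑' u : D, F.measure {(u:ℝ)} := by
      have := measure_biUnion (μ := F.measure) (f := fun u => {u}) hD
        (fun a _ b _ hab => by simpa [Function.onFun] using hab)
        (fun u _ => measurableSet_singleton u)
      simpa using this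
    have h2 : (F.measure D).toReal = f t - f 0 := by
      rw [h1, ENNReal.tsum_toReal_eq (fun u => measure_ne_top _ _), ← hsum]
      refine tsum_congr fun u => ?_
      rw [F.measure_singleton, ENNReal.toReal_ofReal (hjn u)]
    rw [← h2, ENNReal.ofReal_toReal (measure_ne_top _ _)]
  have hsing : F.measure ⟂ₘ volume := by
    refine ⟨Dᶜ, hDm.compl, ?_, ?_⟩
    · rw [measure_compl hDm (measure_ne_top _ _), huniv, hmD, tsub_self]
    · rw [compl_compl]; exact hD.measure_zero _
  filter_upwards [F.ae_hasDerivAt, hsing.rnDeriv_ae_eq_zero] with u h1 h2 hu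
  rw [h2] at h1
  refine HasDerivAt.congr_of_eventuallyEq (by simpa using h1) ?_
  filter_upwards [Ioo_mem_nhds hu.1 hu.2] with r hr'
  exact (hFm r ⟨hr'.1.le, hr'.2.le⟩).symm

/-- Paths staying above the level `-x` on `[0,t)`. -/
def setB (t x : ℝ) : Set (ℝ → ℝ) := {h | ∀ q : ℚ, (q:ℝ) ∈ Ico 0 t → -x ≤ h q}

/-- Paths staying strictly above `-x`, uniformly on compacts of `[0,t)`. -/
def setA (t x : ℝ) : Set (ℝ → ℝ) :=
  {h | ∀ n : ℕ, ∃ m : ℕ, ∀ q : ℚ, (0:ℝ) ≤ q → (q:ℝ) ≤ t - 1 / ((n:ℝ) + 1) →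
    -x + 1 / ((m:ℝ) + 1) ≤ h q}

lemma setA_subset_setB (t x : ℝ) : setA t x ⊆ setB t x := by
  intro h hA q hq
  obtain ⟨n, hn⟩ := exists_nat_one_div_lt (sub_pos.2 hq.2)
  obtain ⟨m, hm⟩ := hA n
  have := hm q hq.1 (by linarith)
  have h2 : (0:ℝ) < 1 / ((m:ℝ) + 1) := by positivity
  linarith

/-- The path with the part up to `u` moved down by `x`. -/
noncomputable def pth (g : ℝ → ℝ) (x u v : ℝ) : ℝ := if v ≤ u then g v - x else g v

/-- The running infimum of the periodic extension over `[0, t + u]`. -/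
noncomputable def runInf (g : ℝ → ℝ) (t x u : ℝ) : ℝ := sInf (pth g x u '' Icc 0 t)

lemma path_ae {f : ℝ → ℝ} {t x c : ℝ} (ht : 0 < t) (hx : 0 < x) (hc : 0 < c)
    (hm : MonotoneOn f (Icc 0 t))
    (hr : ∀ s ∈ Ico (0:ℝ) t, ContinuousWithinAt f (Ici s) s) (hpj : PureJumpOn f t)
    (hf0 : f 0 = 0) (hft : f t - c * t = -x) :
    volume {u | u ∈ Ioo 0 t ∧ theta t u (fun s => f s - c * s) ∈ setA t x}
      = ENNReal.ofReal (x / c) ∧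
    volume {u | u ∈ Ioo 0 t ∧ theta t u (fun s => f s - c * s) ∈ setB t x}
      = ENNReal.ofReal (x / c) := by
  set g : ℝ → ℝ := fun s => f s - c * s with hg
  have hg0 : g 0 = 0 := by simp [hg, hf0]
  have hgt : g t = -x := hft
  have hgr : ∀ s ∈ Ico (0:ℝ) t, ContinuousWithinAt g (Ici s) s := fun s hs =>
    (hr s hs).sub (Continuous.continuousWithinAt (by fun_prop))
  have hgl : ∀ a b, 0 ≤ a → a ≤ b → b ≤ t → g a - c * (b - a) ≤ g b := by
    intro a b h1 h2 h3
    have := hm ⟨h1, h2.trans h3⟩ ⟨h1.trans h2, h3⟩ h2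
    simp only [hg]
    linarith
  set J : ℝ → ℝ := runInf g t x with hJ
  have hbdd : ∀ u, BddBelow (pth g x u '' Icc 0 t) := by
    intro u
    refine ⟨-c * t - x, ?_⟩
    rintro _ ⟨v, hv, rfl⟩
    have h1 := hgl 0 v le_rfl hv.1 hv.2
    have h2 : c * v ≤ c * t := mul_le_mul_of_nonneg_left hv.2 hc.le
    rw [hg0] at h1
    unfold pth
    split_ifs <;> linarith
  have hJle : ∀ u, ∀ v ∈ Icc 0 t, J u ≤ pth g x u v := fun u v hv =>
    csInf_le (hbdd u) ⟨v, hv, rfl⟩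
  have hleJ : ∀ u a, (∀ v ∈ Icc 0 t, a ≤ pth g x u v) → a ≤ J u := by
    intro u a h
    refine le_csInf ⟨_, 0, ⟨le_rfl, ht.le⟩, rfl⟩ ?_
    rintro _ ⟨v, hv, rfl⟩
    exact h v hv
  have hJle1 : ∀ u, ∀ v ∈ Icc 0 t, v ≤ u → J u ≤ g v - x := fun u v hv h => by
    have := hJle u v hv
    rwa [pth, if_pos h] at this
  have hJle2 : ∀ u, ∀ v ∈ Icc 0 t, J u ≤ g v := fun u v hv => by
    have := hJle u v hv
    unfold pth at this
    split_ifs at this <;> linarith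
  have hanti : Antitone J := by
    intro u w huw
    apply hleJ
    intro v hv
    have := hJle w v hv
    unfold pth at this ⊢
    split_ifs at this ⊢ with h1 h2 h2
    · exact this
    · exact absurd (h1.trans huw) h2
    · linarith
    · exact this
  have hstep : ∀ u w a, u ≤ w → a ≤ J u → (∀ v ∈ Icc 0 t, u < v → v ≤ w → a ≤ g v - x) →
      a ≤ J w := by
    intro u w a huw h1 h2
    apply hleJ
    intro v hv
    have h3 := hJle u v hv
    have h4 := h2 v hv
    unfold pth at h3 ⊢
    split_ifs with h5
    · rcases le_or_gt v u with h6 | h6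
      · rw [if_pos h6] at h3; linarith
      · exact h4 h6 h5
    · rw [if_neg (fun h => h5 (h.trans huw))] at h3; linarith
  have hlip : ∀ u w, 0 ≤ u → u ≤ w → w ≤ t → J u - c * (w - u) ≤ J w := by
    intro u w h1 h2 h3
    have h0 : 0 ≤ c * (w - u) := mul_nonneg hc.le (by linarith)
    apply hstep u w _ h2 (by linarith)
    intro v hv h4 h5
    have h6 := hgl u v h1 h4.le hv.2
    have h7 := hJle1 u u ⟨h1, h2.trans h3⟩ le_rfl
    have h8 : c * (v - u) ≤ c * (w - u) := mul_le_mul_of_nonneg_left (by linarith) hc.le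
    linarith
  have hJ0t : J t - J 0 = -x := by
    have e1 : J t + x ≤ J 0 := by
      apply hleJ
      intro v hv
      have h1 := hJle1 t v hv hv.2
      have h2 := hJle1 t t ⟨ht.le, le_rfl⟩ le_rfl
      unfold pth
      split_ifs with h
      · have : v = 0 := le_antisymm h hv.1
        subst this
        linarith
      · linarith
    have e2 : J 0 - x ≤ J t := by
      apply hleJ
      intro v hv
      rw [pth, if_pos hv.2]
      linarith [hJle2 0 v hv]
    linarith
  have hLip : LipschitzOnWith (Real.toNNReal c) J (uIcc 0 t) := by
    rw [uIcc_of_le ht.le]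
    apply LipschitzOnWith.of_le_add_mul
    intro a ha b hb
    rw [Real.coe_toNNReal c hc.le, Real.dist_eq]
    have h9 : 0 ≤ c * |a - b| := by positivity
    rcases le_total a b with h | h
    · have := hlip a b ha.1 h hb.2
      rw [abs_sub_comm, abs_of_nonneg (sub_nonneg.2 h)]
      linarith
    · have := hanti h
      linarith
  have hint := hLip.absolutelyContinuousOnInterval.integral_deriv_eq_sub
  rw [hJ0t] at hint
  have hdiff : ∀ᵐ u, DifferentiableAt ℝ J u := by
    have h1 : Monotone (fun u => - J u) := fun a b h => neg_le_neg (hanti h)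
    filter_upwards [h1.ae_differentiableAt] with u hu
    simpa using hu.neg
  -- the dichotomy
  have key : ∀ᵐ u, u ∈ Ioo 0 t → (g u - x ≤ J u → deriv J u = -c) ∧
      (deriv J u = -c → g u - x = J u ∧ ∀ w < u, J u < J w) ∧
      (deriv J u ≠ -c → deriv J u = 0) := by
    filter_upwards [hdiff, pj_deriv ht hm hr hpj] with u hd hfd hu
    have hfd := hfd hu
    have huI : u ∈ Icc 0 t := ⟨hu.1.le, hu.2.le⟩
    have hgd : HasDerivAt g (-c) u := by
      have := hfd.fun_sub ((hasDerivAt_id u).const_mul c)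
      simpa [hg] using this
    have hgeJ : J u ≤ g u - x := hJle1 u u huI le_rfl
    have hA : g u - x ≤ J u → deriv J u = -c := by
      intro h
      have hmin : IsLocalMin (fun w => g w - x - J w) u := by
        filter_upwards [Ioo_mem_nhds hu.1 hu.2] with w hw
        have := hJle1 w w ⟨hw.1.le, hw.2.le⟩ le_rfl
        show g u - x - J u ≤ g w - x - J w
        linarith
      have := hmin.hasDerivAt_eq_zero ((hgd.sub_const x).sub hd.hasDerivAt)
      linarith
    have hB : J u < g u - x → deriv J u = 0 := by
      intro h
      have h1 : ∀ᶠ w in 𝓝[≥] u, J u + x < g w :=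
        (hgr u ⟨hu.1.le, hu.2⟩).eventually (lt_mem_nhds (by linarith))
      obtain ⟨d, hd1, hd2⟩ := (mem_nhdsGE_iff_exists_Ico_subset).1 h1
      have h2 : ∀ᶠ w in 𝓝[>] u, J w = J u := by
        filter_upwards [Ioo_mem_nhdsGT hd1] with w hw
        apply le_antisymm (hanti hw.1.le)
        apply hstep u w _ hw.1.le le_rfl
        intro v hv h3 h4
        have : J u + x < g v := hd2 ⟨h3.le, h4.trans_lt hw.2⟩
        linarith
      have h3 : HasDerivWithinAt J 0 (Ioi u) u :=
        (hasDerivWithinAt_const u (Ioi u) (J u)).congr_of_eventuallyEq h2 rfl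
      exact (uniqueDiffWithinAt_Ioi u).eq_deriv _ hd.hasDerivAt.hasDerivWithinAt h3
    refine ⟨hA, ?_, ?_⟩
    · intro h
      have h0 : g u - x = J u := by
        by_contra hne
        have := hB (lt_of_le_of_ne hgeJ (Ne.symm hne))
        linarith
      refine ⟨h0, ?_⟩
      intro w hw
      by_contra hle
      push Not at hle
      have h2 : ∀ᶠ r in 𝓝[<] u, J r = J u := by
        filter_upwards [Ioo_mem_nhdsLT hw] with r hr'
        exact le_antisymm ((hanti hr'.1.le).trans hle) (hanti hr'.2.le)
      have h3 : HasDerivWithinAt J 0 (Iio u) u :=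
        (hasDerivWithinAt_const u (Iio u) (J u)).congr_of_eventuallyEq h2 rfl
      have := (uniqueDiffWithinAt_Iio u).eq_deriv _ hd.hasDerivAt.hasDerivWithinAt h3
      linarith
    · intro h
      apply hB
      by_contra h'
      exact h (hA (not_lt.1 h'))
  set D : Set ℝ := {u | u ∈ Ioo 0 t ∧ deriv J u = -c} with hD
  have hDm : MeasurableSet D :=
    measurableSet_Ioo.inter ((measurable_deriv J) (measurableSet_singleton (-c)))
  have hDfin : volume D ≠ ⊤ := by
    refine ((measure_mono (fun u hu => hu.1)).trans_lt
      (measure_Ioo_lt_top (μ := volume) (a := 0) (b := t))).ne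
  have hDv : volume D = ENNReal.ofReal (x / c) := by
    have h1 : ∫ u in (0:ℝ)..t, deriv J u = ∫ u in Ioo 0 t, D.indicator (fun _ => -c) u := by
      rw [intervalIntegral.integral_of_le ht.le, integral_Ioc_eq_integral_Ioo]
      apply setIntegral_congr_ae measurableSet_Ioo
      filter_upwards [key] with u hk hu
      by_cases h : deriv J u = -c
      · rw [indicator_of_mem (show u ∈ D from ⟨hu, h⟩), h]
      · rw [indicator_of_notMem (fun h' : u ∈ D => h h'.2), (hk hu).2.2 h]
    rw [hint, setIntegral_indicator hDm, inter_eq_self_of_subset_right (fun u hu => hu.1)] at h1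
    simp only [integral_const, smul_eq_mul, measureReal_restrict_apply_univ] at h1
    have h2 : (volume D).toReal = x / c := by
      rw [eq_div_iff hc.ne']
      change -x = (volume D).toReal * -c at h1
      linarith
    rw [← h2, ENNReal.ofReal_toReal hDfin]
  have hth1 : ∀ u ∈ Ioo 0 t, ∀ v, v < t → theta t u g (v - u) = g v - g u := by
    intro u hu v hv
    rw [theta, if_pos (by linarith), hg0]
    ring_nf
  have hth2 : ∀ u ∈ Ioo 0 t, ∀ v, 0 ≤ v → theta t u g (v + (t - u)) = g v - x - g u := by
    intro u hu v hv
    rw [theta, if_neg (by linarith), hgt]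
    ring_nf
  have hDA : ∀ᵐ u, u ∈ D → theta t u g ∈ setA t x := by
    filter_upwards [key] with u hk hu n
    obtain ⟨h1, h2⟩ := (hk hu.1).2.1 hu.2
    have hn : (0:ℝ) < 1 / ((n:ℝ) + 1) := by positivity
    obtain ⟨m, hm'⟩ := exists_nat_one_div_lt
      (sub_pos.2 (h2 (u - 1 / ((n:ℝ) + 1)) (by linarith)))
    refine ⟨m, fun q hq0 hq => ?_⟩
    rcases lt_or_ge (q:ℝ) (t - u) with h3 | h3
    · have e1 := hth1 u hu.1 (q + u) (by linarith)
      have e2 := hJle2 (u - 1 / ((n:ℝ) + 1)) (q + u) ⟨by linarith [hu.1.1], by linarith⟩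
      rw [add_sub_cancel_right] at e1
      rw [e1]
      linarith
    · have e1 := hth2 u hu.1 (q - (t - u)) (by linarith)
      have e2 := hJle1 (u - 1 / ((n:ℝ) + 1)) (q - (t - u)) ⟨by linarith, by linarith [hu.1.2]⟩
        (by linarith)
      rw [sub_add_cancel] at e1
      rw [e1]
      linarith
  have hBD : ∀ᵐ u, u ∈ Ioo 0 t → theta t u g ∈ setB t x → u ∈ D := by
    filter_upwards [key] with u hk hu hB
    refine ⟨hu, (hk hu).1 ?_⟩
    have c1 : ∀ v, 0 ≤ v → v < u → g u ≤ g v := by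
      intro v hv0 hvu
      refine rc_rat_shift (-(t - u)) (hgr v ⟨hv0, hvu.trans hu.2⟩) hvu ?_
      intro q hq1 hq2
      have e1 := hth2 u hu (q + -(t - u)) (by linarith)
      have e2 := hB q ⟨by linarith [hu.2], by linarith⟩
      rw [neg_add_cancel_right] at e1
      linarith
    have c2 : ∀ v, u < v → v < t → g u - x ≤ g v := by
      intro v hv0 hvu
      refine rc_rat_shift u (hgr v ⟨hu.1.le.trans hv0.le, hvu⟩) hvu ?_
      intro q hq1 hq2
      have e1 := hth1 u hu (q + u) (by linarith)
      have e2 := hB q ⟨by linarith, by linarith [hu.1]⟩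
      rw [add_sub_cancel_right] at e1
      linarith
    apply hleJ
    intro v hv
    unfold pth
    split_ifs with h
    · rcases h.lt_or_eq with h | h
      · linarith [c1 v hv.1 h]
      · rw [h]
    · rcases hv.2.lt_or_eq with h' | h'
      · exact c2 v (not_le.1 h) h'
      · have := c1 0 le_rfl hu.1
        rw [h']
        linarith
  rw [← hDv]
  constructor
  · apply measure_congr
    filter_upwards [hDA, hBD] with u h1 h2
    apply propext
    constructor
    · rintro ⟨h3, h4⟩
      exact h2 h3 (setA_subset_setB t x h4)
    · intro h
      exact ⟨h.1, h1 h⟩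
  · apply measure_congr
    filter_upwards [hDA, hBD] with u h1 h2
    apply propext
    constructor
    · rintro ⟨h3, h4⟩
      exact h2 h3 h4
    · intro h
      exact ⟨h.1, setA_subset_setB t x (h1 h)⟩

/-- A jointly measurable version of a right-continuous process. -/
noncomputable def jm {Ω : Type*} (X : Ω → ℝ → ℝ) (p : ℝ × Ω) : ℝ :=
  limsup (fun n : ℕ => X p.2 (((⌊((n:ℝ) + 1) * p.1⌋ : ℝ) + 1) / ((n:ℝ) + 1))) atTop

lemma jm_measurable {Ω : Type*} [MeasurableSpace Ω] {X : Ω → ℝ → ℝ} (hX : Measurable X) :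
    Measurable (jm X) := by
  unfold jm
  apply Measurable.limsup
  intro n
  have h1 : Measurable (fun p : ℤ × Ω => X p.2 (((p.1 : ℝ) + 1) / ((n:ℝ) + 1))) := by
    apply measurable_from_prod_countable_right
    intro k
    exact (measurable_pi_apply (((k : ℝ) + 1) / ((n:ℝ) + 1))).comp hX
  have h2 : Measurable (fun p : ℝ × Ω => (⌊((n:ℝ) + 1) * p.1⌋, p.2)) := by
    refine Measurable.prodMk ?_ measurable_snd
    exact Int.measurable_floor.comp (measurable_fst.const_mul _)
  exact h1.comp h2

lemma jm_eq {Ω : Type*} {X : Ω → ℝ → ℝ} {ω : Ω} {u : ℝ}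
    (h : ContinuousWithinAt (X ω) (Ici u) u) : jm X (u, ω) = X ω u := by
  refine Tendsto.limsup_eq ?_
  refine h.tendsto.comp ?_
  have hp : ∀ n : ℕ, (0:ℝ) < (n:ℝ) + 1 := fun n => by positivity
  have hlo : ∀ n : ℕ, u ≤ ((⌊((n:ℝ) + 1) * u⌋ : ℝ) + 1) / ((n:ℝ) + 1) := fun n => by
    rw [le_div_iff₀ (hp n), mul_comm]
    exact (Int.lt_floor_add_one _).le
  have hhi : ∀ n : ℕ, ((⌊((n:ℝ) + 1) * u⌋ : ℝ) + 1) / ((n:ℝ) + 1) ≤ u + 1 / ((n:ℝ) + 1) := by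
    intro n
    have e : (u + 1 / ((n:ℝ) + 1)) * ((n:ℝ) + 1) = ((n:ℝ) + 1) * u + 1 := by
      have := (hp n).ne'
      field_simp
    rw [div_le_iff₀ (hp n), e]
    linarith [Int.floor_le (((n:ℝ) + 1) * u)]
  refine tendsto_nhdsWithin_iff.2 ⟨?_, Eventually.of_forall hlo⟩
  refine tendsto_of_tendsto_of_tendsto_of_le_of_le tendsto_const_nhds ?_ hlo hhi
  have := (tendsto_const_nhds (x := u)).add (tendsto_one_div_add_atTop_nhds_zero_nat (𝕜 := ℝ))
  simpa using this

lemma setB_measurable (t x : ℝ) : MeasurableSet (setB t x) := by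
  have : setB t x = ⋂ q : ℚ, ⋂ _ : (q:ℝ) ∈ Ico 0 t, {h : ℝ → ℝ | -x ≤ h q} := by
    ext h; simp [setB]
  rw [this]
  refine MeasurableSet.iInter fun q => MeasurableSet.iInter fun _ => ?_
  exact measurableSet_le measurable_const (measurable_pi_apply _)

lemma setA_measurable (t x : ℝ) : MeasurableSet (setA t x) := by
  have : setA t x = ⋂ n : ℕ, ⋃ m : ℕ, ⋂ q : ℚ, ⋂ _ : (0:ℝ) ≤ q,
      ⋂ _ : (q:ℝ) ≤ t - 1 / ((n:ℝ) + 1), {h : ℝ → ℝ | -x + 1 / ((m:ℝ) + 1) ≤ h q} := by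
    ext h; simp only [setA, mem_ofPred_eq, mem_iInter, mem_iUnion]
  rw [this]
  refine MeasurableSet.iInter fun n => MeasurableSet.iUnion fun m => MeasurableSet.iInter fun q =>
    MeasurableSet.iInter fun _ => MeasurableSet.iInter fun _ => ?_
  exact measurableSet_le measurable_const (measurable_pi_apply _)

lemma setB_local {t x : ℝ} {h h' : ℝ → ℝ} (e : EqOn h h' (Ico 0 t)) :
    h ∈ setB t x ↔ h' ∈ setB t x := by
  refine forall_congr' fun q => forall_congr' fun hq => ?_
  rw [e hq]

lemma setA_local {t x : ℝ} {h h' : ℝ → ℝ} (e : EqOn h h' (Ico 0 t)) :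
    h ∈ setA t x ↔ h' ∈ setA t x := by
  refine forall_congr' fun n => exists_congr fun m => forall_congr' fun q =>
    forall_congr' fun hq => forall_congr' fun hq' => ?_
  have hn : (0:ℝ) < 1 / ((n:ℝ) + 1) := by positivity
  rw [e ⟨hq, by linarith⟩]

lemma prob_of_shift {Ω : Type*} [MeasurableSpace Ω] (P : Measure Ω) [IsProbabilityMeasure P]
    {t a : ℝ} (ht : 0 < t) (X : Ω → ℝ → ℝ) (hX : Measurable X)
    (hr : ∀ᵐ ω ∂P, ∀ s ∈ Ico (0:ℝ) t, ContinuousWithinAt (X ω) (Ici s) s)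
    (hC : ∀ u ∈ Icc (0:ℝ) t, Measure.map (fun ω => theta t u (X ω)) P = Measure.map X P)
    (G : Set (ℝ → ℝ)) (hG : MeasurableSet G)
    (hloc : ∀ h h' : ℝ → ℝ, EqOn h h' (Ico 0 t) → (h ∈ G ↔ h' ∈ G))
    (hv : ∀ᵐ ω ∂P, volume {u | u ∈ Ioo 0 t ∧ theta t u (X ω) ∈ G} = ENNReal.ofReal a) :
    P {ω | X ω ∈ G} = ENNReal.ofReal (a / t) := by
  let T : ℝ × Ω → ℝ → ℝ := fun p s =>
    if s < t - p.1 then X p.2 0 + jm X (s + p.1, p.2) - jm X p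
    else jm X (s - (t - p.1), p.2) + X p.2 t - jm X p
  have hXs : ∀ s, Measurable (fun ω => X ω s) := fun s => (measurable_pi_apply s).comp hX
  have hjm := jm_measurable hX
  have hT : Measurable T := by
    refine measurable_pi_iff.2 fun s => ?_
    refine Measurable.ite (measurableSet_lt measurable_const (by fun_prop)) ?_ ?_
    · exact (((hXs 0).comp measurable_snd).add (hjm.comp (by fun_prop))).sub hjm
    · exact ((hjm.comp (by fun_prop)).add ((hXs t).comp measurable_snd)).sub hjm
  have hTeq : ∀ᵐ ω ∂P, ∀ u ∈ Ioo 0 t, (T (u, ω) ∈ G ↔ theta t u (X ω) ∈ G) := by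
    filter_upwards [hr] with ω hω u hu
    apply hloc
    intro s hs
    have e0 := jm_eq (hω u ⟨hu.1.le, hu.2⟩)
    simp only [T, theta, e0]
    split_ifs with h
    · rw [jm_eq (hω (s + u) ⟨by linarith [hs.1, hu.1], by linarith⟩)]
    · rw [jm_eq (hω (s - (t - u)) ⟨by linarith, by linarith [hs.2, hu.2]⟩)]
  let E : Set (ℝ × Ω) := {p | p.1 ∈ Ioo 0 t ∧ T p ∈ G}
  have hE : MeasurableSet E := (measurable_fst measurableSet_Ioo).inter (hT hG)
  have h1 : ((volume : Measure ℝ).prod P) E = ENNReal.ofReal a := by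
    rw [Measure.prod_apply_symm hE]
    have : ∀ᵐ ω ∂P, volume ((fun u => (u, ω)) ⁻¹' E) = ENNReal.ofReal a := by
      filter_upwards [hv, hTeq] with ω h1 h2
      rw [← h1]
      congr 1
      ext u
      simp only [E, mem_preimage, mem_ofPred_eq]
      exact and_congr_right fun hu => h2 u hu
    rw [lintegral_congr_ae this]
    simp
  have hth : ∀ u, Measurable (fun ω => theta t u (X ω)) := by
    intro u
    refine measurable_pi_iff.2 fun s => ?_
    unfold theta
    split_ifs
    · exact ((hXs _).add (hXs _)).sub (hXs _)
    · exact ((hXs _).add (hXs _)).sub (hXs _)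
  have h2 : ((volume : Measure ℝ).prod P) E = P {ω | X ω ∈ G} * ENNReal.ofReal t := by
    rw [Measure.prod_apply hE]
    have : ∀ u, P (Prod.mk u ⁻¹' E) = (Ioo 0 t).indicator (fun _ => P {ω | X ω ∈ G}) u := by
      intro u
      by_cases hu : u ∈ Ioo 0 t
      · rw [indicator_of_mem hu]
        have e1 : P (Prod.mk u ⁻¹' E) = P {ω | theta t u (X ω) ∈ G} := by
          apply measure_congr
          filter_upwards [hTeq] with ω h
          apply propext
          constructor
          · intro h'
            exact (h u hu).1 h'.2
          · intro h'
            exact ⟨hu, (h u hu).2 h'⟩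
        have e2 := congrArg (fun μ => μ G) (hC u ⟨hu.1.le, hu.2.le⟩)
        simp only [Measure.map_apply (hth u) hG, Measure.map_apply hX hG] at e2
        rw [e1]
        exact e2
      · rw [indicator_of_notMem hu]
        have : Prod.mk u ⁻¹' E = ∅ := by
          ext ω
          simp only [E, mem_preimage, mem_ofPred_eq, mem_empty_iff_false, iff_false]
          exact fun h => hu h.1
        rw [this, measure_empty]
    simp only [this]
    rw [lintegral_indicator measurableSet_Ioo, setLIntegral_const, Real.volume_Ioo, sub_zero]
  rw [ENNReal.ofReal_div_of_pos ht, ← h1, h2]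
  rw [ENNReal.mul_div_cancel_right (by simpa using ht) ENNReal.ofReal_ne_top]


lemma no_hit {f : ℝ → ℝ} {t x c : ℝ} (hx : 0 < x) (hc : 0 < c)
    (hm : MonotoneOn f (Icc 0 t)) (hf0 : f 0 = 0)
    (hr : ∀ s ∈ Ico (0:ℝ) t, ContinuousWithinAt (fun s => f s - c * s) (Ici s) s)
    (hn : ∀ s ∈ Ico (0:ℝ) t, f s - c * s ≠ -x) :
    ∀ s ∈ Ico (0:ℝ) t, -x ≤ f s - c * s := by
  intro s hs
  by_contra hlt
  push Not at hlt
  let S : Set ℝ := {r | r ∈ Icc 0 s ∧ f r - c * r < -x}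
  have hSb : BddBelow S := ⟨0, fun r hr' => hr'.1.1⟩
  have hSn : S.Nonempty := ⟨s, ⟨hs.1, le_rfl⟩, hlt⟩
  set a := sInf S with ha
  have ha0 : 0 ≤ a := le_csInf hSn fun r hr' => hr'.1.1
  have has : a ≤ s := csInf_le hSb ⟨⟨hs.1, le_rfl⟩, hlt⟩
  have haI : a ∈ Ico 0 t := ⟨ha0, has.trans_lt hs.2⟩
  have h1 : f a - c * a ≤ -x := by
    by_contra h
    push Not at h
    have h2 : ∀ᶠ r in 𝓝[≥] a, -x < f r - c * r := (hr a haI).eventually (lt_mem_nhds h)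
    obtain ⟨d, hd1, hd2⟩ := (mem_nhdsGE_iff_exists_Ico_subset).1 h2
    obtain ⟨r, hr1, hr2⟩ := exists_lt_of_csInf_lt hSn (show sInf S < d from hd1)
    have h3 : -x < f r - c * r := hd2 ⟨csInf_le hSb hr1, hr2⟩
    linarith [hr1.2]
  have h2 : f a - c * a < -x := lt_of_le_of_ne h1 (hn a haI)
  have hapos : 0 < a := by
    rcases ha0.lt_or_eq with h | h
    · exact h
    · rw [← h, hf0] at h2
      linarith
  -- slightly to the left of `a` the path is also below `-x`
  obtain ⟨δ, hδ0, hδ⟩ : ∃ δ > 0, f a - c * a + c * δ < -x ∧ δ ≤ a := by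
    refine ⟨min a ((-x - (f a - c * a)) / (2 * c)), lt_min hapos (div_pos (by linarith)
      (by linarith)), ?_, min_le_left _ _⟩
    have e1 : c * min a ((-x - (f a - c * a)) / (2 * c)) ≤
        c * ((-x - (f a - c * a)) / (2 * c)) :=
      mul_le_mul_of_nonneg_left (min_le_right _ _) hc.le
    have e2 : c * ((-x - (f a - c * a)) / (2 * c)) = (-x - (f a - c * a)) / 2 := by
      field_simp
    linarith
  have h3 : f (a - δ) ≤ f a :=
    hm ⟨by linarith, by linarith [haI.2]⟩ ⟨ha0, haI.2.le⟩ (by linarith)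
  have h4 : a - δ ∈ S := ⟨⟨by linarith, by linarith⟩, by nlinarith⟩
  have := csInf_le hSb h4
  linarith

/-- Ballot theorem for `X_s = Y_s − c s` with `Y` a pure-jump non-decreasing cyclically
interchangeable process, `Y 0 = 0`, `c > 0`, `X t = −x` a.s.: `P(T_x = t) = x/(ct)`. -/
theorem ballot_pure_jump {Ω : Type*} [MeasurableSpace Ω] (P : Measure Ω)
    [IsProbabilityMeasure P] (t x c : ℝ) (ht : 0 < t) (hx : 0 < x) (hc : 0 < c)
    (Y : Ω → ℝ → ℝ) (hmeas : Measurable Y)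
    (hmono : ∀ᵐ ω ∂P, MonotoneOn (Y ω) (Icc 0 t))
    (hcadlag : ∀ᵐ ω ∂P, ∀ s ∈ Ico (0:ℝ) t, ContinuousWithinAt (Y ω) (Ici s) s)
    (hpj : ∀ᵐ ω ∂P, PureJumpOn (Y ω) t)
    (hY0 : ∀ᵐ ω ∂P, Y ω 0 = 0)
    (hCEI : ∀ u ∈ Icc (0:ℝ) t,
      Measure.map (fun ω => theta t u (fun s => Y ω s - c * s)) P =
        Measure.map (fun ω => fun s => Y ω s - c * s) P)
    (hT : ∀ᵐ ω ∂P, Y ω t - c * t = -x) :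
    (P {ω | ∀ s ∈ Ico (0:ℝ) t, Y ω s - c * s ≠ -x}).toReal = x / (c * t) := by
  have hX : Measurable (fun ω => fun s => Y ω s - c * s) := by
    refine measurable_pi_iff.2 fun s => ?_
    exact ((measurable_pi_apply s).comp hmeas).sub_const _
  have hrX : ∀ᵐ ω ∂P, ∀ s ∈ Ico (0:ℝ) t,
      ContinuousWithinAt (fun s => Y ω s - c * s) (Ici s) s := by
    filter_upwards [hcadlag] with ω h s hs
    exact (h s hs).sub (Continuous.continuousWithinAt (by fun_prop))
  have hA := prob_of_shift P (a := x / c) ht _ hX hrX hCEI (setA t x) (setA_measurable t x)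
    (fun _ _ => setA_local) (by
      filter_upwards [hmono, hcadlag, hpj, hY0, hT] with ω h1 h2 h3 h4 h5
      exact (path_ae ht hx hc h1 h2 h3 h4 h5).1)
  have hB := prob_of_shift P (a := x / c) ht _ hX hrX hCEI (setB t x) (setB_measurable t x)
    (fun _ _ => setB_local) (by
      filter_upwards [hmono, hcadlag, hpj, hY0, hT] with ω h1 h2 h3 h4 h5
      exact (path_ae ht hx hc h1 h2 h3 h4 h5).2)
  have hle1 : P {ω | (fun s => Y ω s - c * s) ∈ setA t x} ≤
      P {ω | ∀ s ∈ Ico (0:ℝ) t, Y ω s - c * s ≠ -x} := by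
    apply measure_mono_ae
    filter_upwards [hrX] with ω h1 h2 s hs
    obtain ⟨n, hn⟩ := exists_nat_one_div_lt (sub_pos.2 hs.2)
    obtain ⟨m, hm⟩ := h2 n
    have h3 := rc_rat (b := t - 1 / ((n:ℝ) + 1)) (a := -x + 1 / ((m:ℝ) + 1)) (h1 s hs)
      (by linarith) (by
        rintro r h3 h4 ⟨q, rfl⟩
        exact hm q (hs.1.trans h3.le) h4.le)
    have h4 : (0:ℝ) < 1 / ((m:ℝ) + 1) := by positivity
    intro h5
    linarith
  have hle2 : P {ω | ∀ s ∈ Ico (0:ℝ) t, Y ω s - c * s ≠ -x} ≤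
      P {ω | (fun s => Y ω s - c * s) ∈ setB t x} := by
    apply measure_mono_ae
    filter_upwards [hrX, hmono, hY0] with ω h1 h2 h3 h4 q hq
    exact no_hit hx hc h2 h3 h1 h4 q hq
  have hfin := le_antisymm (hle2.trans_eq hB) (hA.symm.le.trans hle1)
  rw [hfin, ENNReal.toReal_ofReal (by positivity), div_div]
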